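/- arXiv:1707.02782 — 4 statements merged into one kernel-verified Lean document; each statement's English description precedes it below -/
import Mathlib

section
/- For every real α > −1 and all integers j, l ≥ 1 with |j − l| > 2, the integrated Jacobi polynomials satisfy ∫_{−1}^{1} (1−x)^α p̂_j^α(x) p̂_l^α(x) dx = 0. -/
open MeasureTheory

/-- Jacobi polynomial with parameters `(α, 0)`, via the Rodrigues formula. -/
noncomputable def jacobiP (α : ℝ) (n : ℕ) (x : ℝ) : ℝ :=
  1 / (2 ^ n * (n.factorial : ℝ) * (1 - x) ^ α) *
    iteratedDeriv n (fun t : ℝ => (1 - t) ^ α * (t ^ 2 - 1) ^ n) x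

/-- Integrated Jacobi polynomial `p̂_n^α`. -/
noncomputable def jacobiPhat (α : ℝ) (n : ℕ) (x : ℝ) : ℝ :=
  if n = 0 then 1 else ∫ ξ in (-1 : ℝ)..x, jacobiP α (n - 1) ξ

/-!
Differentiating `(1 - x) ^ a * p` for a polynomial `p` gives `(1 - x) ^ (a - 1)` times the
polynomial `(1 - X) * p' - a * p`, whose degree is not larger. Hence the Rodrigues formula defines
a polynomial of degree at most `n`, and integrating by parts `n` times shows that it is orthogonal
to every polynomial of smaller degree.

For `a > 0` the powers of `X - 1` are eigenvectors of `p ↦ (1 - X) * p' - a * p` with nonzero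
eigenvalues, so `(1 - x) ^ α * q` is the derivative of some `(1 - x) ^ (α + 1) * r` with
`deg r ≤ deg q`. One more integration by parts moves the derivative from this function to `p̂_l`,
and turns the integral against `q` into that of `p_{l-1}` against `-(1 - X) * r`, whose degree is
at most `deg q + 1`; it vanishes when `deg q + 2 < l`.
-/

open Polynomial

section WeightDeriv

variable {R : Type*} [CommRing R]

/-- The operator `p ↦ (1 - X) * p' - a * p`, by which differentiation acts on the polynomial factor
of a product `(1 - x) ^ a * p`: the derivative is `(1 - x) ^ (a - 1) * weightDeriv a p`. -/
noncomputable def weightDeriv (a : R) : R[X] →ₗ[R] R[X] :=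
  LinearMap.mulLeft R (1 - X) ∘ₗ derivative - a • LinearMap.id

lemma weightDeriv_apply (a : R) (p : R[X]) :
    weightDeriv a p = (1 - X) * derivative p - C a * p := by
  simp [weightDeriv, smul_eq_C_mul]

lemma natDegree_weightDeriv_le (a : R) (p : R[X]) :
    (weightDeriv a p).natDegree ≤ p.natDegree := by
  rw [weightDeriv_apply]
  refine natDegree_sub_le_of_le ?_ (natDegree_C_mul_le a p) |>.trans (max_self _).le
  rcases Nat.eq_zero_or_pos p.natDegree with hp | hp
  · simp [derivative_of_natDegree_zero hp]
  · have hX : (1 - X : R[X]).natDegree ≤ 1 := by compute_degree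
    have hp' := natDegree_derivative_le p
    exact natDegree_mul_le.trans (by omega)

lemma pow_sub_one_dvd_weightDeriv (a : R) {p q : R[X]} {n : ℕ} (h : q ^ n ∣ p) :
    q ^ (n - 1) ∣ weightDeriv a p := by
  rw [weightDeriv_apply]
  exact dvd_sub ((pow_sub_one_dvd_derivative_of_pow_dvd h).mul_left _)
    (((pow_dvd_pow q (Nat.sub_le n 1)).trans h).mul_left _)

lemma weightDeriv_X_sub_one_pow (a : R) (n : ℕ) :
    weightDeriv a ((X - 1) ^ n) = -(a + n) • (X - 1) ^ n := by
  rw [weightDeriv_apply, smul_eq_C_mul]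
  cases n with
  | zero => simp
  | succ n =>
    simp only [derivative_pow_succ, map_add, map_natCast, map_one, derivative_sub, derivative_X,
      derivative_one, sub_zero, mul_one, Nat.cast_add, Nat.cast_one, neg_add_rev, map_neg]
    ring

/-- The polynomial factor of the `k`-th derivative of `(1 - x) ^ a * p`, the other factor being
`(1 - x) ^ (a - k)`. -/
noncomputable def iterWeightDeriv (a : R) : ℕ → R[X] →ₗ[R] R[X]
  | 0 => LinearMap.id
  | k + 1 => weightDeriv (a - k) ∘ₗ iterWeightDeriv a k

lemma iterWeightDeriv_zero (a : R) (p : R[X]) : iterWeightDeriv a 0 p = p := rfl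

lemma iterWeightDeriv_succ (a : R) (k : ℕ) (p : R[X]) :
    iterWeightDeriv a (k + 1) p = weightDeriv (a - k) (iterWeightDeriv a k p) := rfl

lemma natDegree_iterWeightDeriv_le (a : R) (k : ℕ) (p : R[X]) :
    (iterWeightDeriv a k p).natDegree ≤ p.natDegree := by
  induction k with
  | zero => rfl
  | succ k ih =>
    rw [iterWeightDeriv_succ]
    exact (natDegree_weightDeriv_le _ _).trans ih

lemma pow_sub_dvd_iterWeightDeriv (a : R) {p q : R[X]} {n : ℕ} (h : q ^ n ∣ p) (k : ℕ) :
    q ^ (n - k) ∣ iterWeightDeriv a k p := by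
  induction k with
  | zero => exact h
  | succ k ih =>
    rw [iterWeightDeriv_succ]
    exact pow_sub_one_dvd_weightDeriv _ ih

end WeightDeriv

section Preimages

variable {K : Type*} [Field K]

lemma exists_weightDeriv_eq {a : K} (ha : ∀ n : ℕ, a + n ≠ 0) (q : K[X]) :
    ∃ r : K[X], r.natDegree ≤ q.natDegree ∧ weightDeriv a r = q := by
  refine ⟨(taylor 1 q).sum fun i c => (-(a + i)⁻¹ * c) • (X - 1) ^ i, ?_, ?_⟩
  · refine natDegree_sum_le_of_forall_le _ _ fun i hi => (natDegree_smul_le _ _).trans ?_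
    calc ((X - 1 : K[X]) ^ i).natDegree
        ≤ i := by compute_degree
      _ ≤ q.natDegree := natDegree_taylor q 1 ▸ le_natDegree_of_mem_supp i hi
  · conv_rhs => rw [← sum_taylor_eq q 1]
    simp only [Polynomial.sum_def, map_sum, map_smul, weightDeriv_X_sub_one_pow]
    refine Finset.sum_congr rfl fun i _ => ?_
    rw [smul_smul, smul_eq_C_mul, C_1]
    congr 2
    field_simp [ha i]

lemma exists_derivative_eq_and_isRoot [CharZero K] (p : K[X]) (c : K) :
    ∃ P : K[X], P.natDegree ≤ p.natDegree + 1 ∧ derivative P = p ∧ P.IsRoot c := by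
  let Q : K[X] := p.sum fun i b => C (b / (i + 1)) * X ^ (i + 1)
  have hQ : derivative Q = p := by
    conv_rhs => rw [← sum_C_mul_X_pow_eq p]
    simp only [Q, Polynomial.sum_def, derivative_sum, derivative_C_mul_X_pow]
    refine Finset.sum_congr rfl fun i _ => ?_
    have hi : (i : K) + 1 ≠ 0 := Nat.cast_add_one_ne_zero i
    simp [hi]
  refine ⟨Q - C (Q.eval c), ?_, by simp [hQ], by simp⟩
  rw [natDegree_sub_C]
  exact natDegree_sum_le_of_forall_le _ _ fun i hi =>
    (natDegree_C_mul_X_pow_le _ _).trans (Nat.succ_le_succ (le_natDegree_of_mem_supp i hi))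

end Preimages

section Calculus

lemma hasDerivAt_one_sub_rpow_mul_eval (a : ℝ) (p : ℝ[X]) {t : ℝ} (ht : t < 1) :
    HasDerivAt (fun x => (1 - x) ^ a * p.eval x)
      ((1 - t) ^ (a - 1) * (weightDeriv a p).eval t) t := by
  have ht' : 1 - t ≠ 0 := (sub_pos.mpr ht).ne'
  have hweight : HasDerivAt (fun x : ℝ => (1 - x) ^ a) (-1 * a * (1 - t) ^ (a - 1)) t :=
    ((hasDerivAt_id t).const_sub 1).rpow_const (Or.inl ht')
  refine (hweight.mul (p.hasDerivAt t)).congr_deriv ?_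
  rw [weightDeriv_apply, Real.rpow_sub_one ht']
  simp only [eval_sub, eval_mul, eval_one, eval_X, eval_C]
  field_simp
  ring

lemma iteratedDeriv_one_sub_rpow_mul_eval (a : ℝ) (p : ℝ[X]) (k : ℕ) {t : ℝ} (ht : t < 1) :
    iteratedDeriv k (fun x => (1 - x) ^ a * p.eval x) t =
      (1 - t) ^ (a - k) * (iterWeightDeriv a k p).eval t := by
  induction k generalizing t with
  | zero => simp [iterWeightDeriv_zero]
  | succ k ih =>
    have hnear : iteratedDeriv k (fun x => (1 - x) ^ a * p.eval x) =ᶠ[nhds t]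
        fun x => (1 - x) ^ (a - k) * (iterWeightDeriv a k p).eval x := by
      filter_upwards [Iio_mem_nhds ht] with x hx using ih hx
    rw [iteratedDeriv_succ, hnear.deriv_eq,
      (hasDerivAt_one_sub_rpow_mul_eval (a - k) (iterWeightDeriv a k p) ht).deriv,
      iterWeightDeriv_succ, Nat.cast_succ, sub_sub]

lemma intervalIntegrable_one_sub_rpow_mul_eval {a : ℝ} (ha : -1 < a) (p : ℝ[X]) (b c : ℝ) :
    IntervalIntegrable (fun x => (1 - x) ^ a * p.eval x) volume b c := by
  have hweight : IntervalIntegrable (fun x : ℝ => (1 - x) ^ a) volume b c := by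
    simpa using (intervalIntegral.intervalIntegrable_rpow' ha
      (a := 1 - b) (b := 1 - c)).comp_sub_left 1
  exact hweight.mul_continuousOn p.continuous.continuousOn

lemma integral_one_sub_rpow_mul_weightDeriv_mul {a c : ℝ} (ha : 0 < a) (hc : c ≤ 1) {p q : ℝ[X]}
    (hpq : (p * q).IsRoot c) :
    ∫ x in c..1, (1 - x) ^ (a - 1) * (weightDeriv a p).eval x * q.eval x =
      -∫ x in c..1, (1 - x) ^ a * p.eval x * (derivative q).eval x := by
  have hcont : Continuous fun x : ℝ => (1 - x) ^ a * p.eval x :=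
    ((continuous_const.sub continuous_id).rpow_const fun _ => Or.inr ha.le).mul p.continuous
  have hparts := intervalIntegral.integral_mul_deriv_eq_deriv_mul_of_hasDerivAt
    (a := c) (b := 1) q.continuous.continuousOn hcont.continuousOn
    (fun x _ => q.hasDerivAt x)
    (fun x hx => hasDerivAt_one_sub_rpow_mul_eval a p (max_eq_right hc ▸ hx.2))
    ((derivative q).continuous.intervalIntegrable _ _)
    (intervalIntegrable_one_sub_rpow_mul_eval (by linarith) _ _ _)
  have hleft : q.eval c * ((1 - c) ^ a * p.eval c) = 0 := by
    rw [mul_left_comm, mul_comm (q.eval c), ← eval_mul, hpq.eq_zero, mul_zero]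
  simpa [hleft, Real.zero_rpow ha.ne', mul_comm] using hparts

lemma integral_one_sub_rpow_mul_iterWeightDeriv_mul {a c : ℝ} (hc : c ≤ 1) {k : ℕ}
    (hk : k < a + 1) {p : ℝ[X]} (hp : (X - C c) ^ k ∣ p) (q : ℝ[X]) :
    ∫ x in c..1, (1 - x) ^ (a - k) * (iterWeightDeriv a k p).eval x * q.eval x =
      (-1) ^ k * ∫ x in c..1, (1 - x) ^ a * p.eval x * (derivative^[k] q).eval x := by
  induction k generalizing q with
  | zero => simp [iterWeightDeriv_zero]
  | succ k ih =>
    push_cast at hk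
    have hroot : (iterWeightDeriv a k p).IsRoot c := by
      simpa [dvd_iff_isRoot] using pow_sub_dvd_iterWeightDeriv a hp k
    rw [iterWeightDeriv_succ, Nat.cast_succ, ← sub_sub,
      integral_one_sub_rpow_mul_weightDeriv_mul (by linarith) hc (root_mul_right_of_isRoot q hroot),
      ih (by linarith) ((pow_dvd_pow _ k.le_succ).trans hp), Function.iterate_succ_apply, pow_succ]
    ring

end Calculus

section Jacobi

/-- The Jacobi polynomial `p_n^α` as an element of `ℝ[X]`, from the Rodrigues formula with
`(x ^ 2 - 1) ^ n` factored as `(1 - x) ^ n * (-(x - (-1))) ^ n`. The quotient defining `jacobiP α n`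
can take junk values for `x ≥ 1`, so the two are compared on `x < 1` only. -/
noncomputable def jacobiPoly (α : ℝ) (n : ℕ) : ℝ[X] :=
  (1 / (2 ^ n * n.factorial) : ℝ) • iterWeightDeriv (α + n) n ((-(X - C (-1))) ^ n)

lemma natDegree_jacobiPoly_le (α : ℝ) (n : ℕ) : (jacobiPoly α n).natDegree ≤ n :=
  (natDegree_smul_le _ _).trans <| (natDegree_iterWeightDeriv_le _ _ _).trans (by compute_degree)

lemma jacobiP_eq_eval (α : ℝ) (n : ℕ) {t : ℝ} (ht : t < 1) :
    jacobiP α n t = (jacobiPoly α n).eval t := by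
  have hfactor : (fun x : ℝ => (1 - x) ^ α * (x ^ 2 - 1) ^ n) =ᶠ[nhds t]
      fun x => (1 - x) ^ (α + n) * ((-(X - C (-1))) ^ n : ℝ[X]).eval x := by
    filter_upwards [Iio_mem_nhds ht] with x hx
    rw [Real.rpow_add_natCast (sub_pos.mpr hx).ne', mul_assoc]
    simp only [eval_pow, eval_neg, eval_sub, eval_X, eval_C, ← mul_pow]
    ring
  have hweight : (1 - t) ^ α ≠ 0 := (Real.rpow_pos_of_pos (sub_pos.mpr ht) α).ne'
  rw [jacobiP, hfactor.iteratedDeriv_eq, iteratedDeriv_one_sub_rpow_mul_eval _ _ _ ht,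
    add_sub_cancel_right, jacobiPoly, eval_smul, smul_eq_mul]
  field_simp

theorem integral_one_sub_rpow_mul_jacobiPoly_mul {α : ℝ} (hα : -1 < α) {n : ℕ} {q : ℝ[X]}
    (hq : q.natDegree < n) :
    ∫ x in (-1 : ℝ)..1, (1 - x) ^ α * (jacobiPoly α n).eval x * q.eval x = 0 := by
  have hdvd : (X - C (-1)) ^ n ∣ (-(X - C (-1)) : ℝ[X]) ^ n :=
    pow_dvd_pow_of_dvd (dvd_neg.mpr dvd_rfl) n
  have hparts := integral_one_sub_rpow_mul_iterWeightDeriv_mul (a := α + n) (by norm_num)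
    (by linarith) hdvd q
  simp only [add_sub_cancel_right, iterate_derivative_eq_zero hq, eval_zero, mul_zero,
    intervalIntegral.integral_zero] at hparts
  simp only [jacobiPoly, eval_smul, smul_eq_mul, mul_assoc, mul_left_comm _ (1 / _ : ℝ),
    intervalIntegral.integral_const_mul] at hparts ⊢
  rw [hparts, mul_zero]

lemma jacobiPhat_succ_eq_integral (α : ℝ) (n : ℕ) {x : ℝ} (hx : x ≤ 1) :
    jacobiPhat α (n + 1) x = ∫ ξ in (-1 : ℝ)..x, (jacobiPoly α n).eval ξ := by
  rw [jacobiPhat, if_neg n.succ_ne_zero, Nat.add_sub_cancel]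
  refine intervalIntegral.integral_congr_ae ?_
  filter_upwards [Measure.ae_ne volume (1 : ℝ)] with ξ hξ hmem
  have hle : ξ ≤ 1 := hmem.2.trans (max_le (by norm_num) hx)
  exact jacobiP_eq_eval α n (lt_of_le_of_ne hle hξ)

lemma exists_jacobiPhat_succ_eq_eval (α : ℝ) (n : ℕ) :
    ∃ P : ℝ[X], P.natDegree ≤ n + 1 ∧ derivative P = jacobiPoly α n ∧ P.IsRoot (-1) ∧
      ∀ x ≤ 1, jacobiPhat α (n + 1) x = P.eval x := by
  obtain ⟨P, hdeg, hderiv, hroot⟩ := exists_derivative_eq_and_isRoot (jacobiPoly α n) (-1)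
  refine ⟨P, hdeg.trans (Nat.succ_le_succ (natDegree_jacobiPoly_le α n)), hderiv, hroot, ?_⟩
  intro x hx
  rw [jacobiPhat_succ_eq_integral α n hx, ← hderiv,
    intervalIntegral.integral_eq_sub_of_hasDerivAt (fun t _ => P.hasDerivAt t)
      ((derivative P).continuous.intervalIntegrable _ _), hroot.eq_zero, sub_zero]

lemma exists_jacobiPhat_eq_eval (α : ℝ) (n : ℕ) :
    ∃ P : ℝ[X], P.natDegree ≤ n ∧ ∀ x ≤ 1, jacobiPhat α n x = P.eval x := by
  cases n with
  | zero => exact ⟨1, by simp, by simp [jacobiPhat]⟩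
  | succ n =>
    obtain ⟨P, hdeg, -, -, hP⟩ := exists_jacobiPhat_succ_eq_eval α n
    exact ⟨P, hdeg, hP⟩

theorem integral_one_sub_rpow_mul_eval_mul_jacobiPhat {α : ℝ} (hα : -1 < α) {l : ℕ} {q : ℝ[X]}
    (hq : q.natDegree + 2 < l) :
    ∫ x in (-1 : ℝ)..1, (1 - x) ^ α * q.eval x * jacobiPhat α l x = 0 := by
  obtain ⟨n, rfl⟩ := Nat.exists_eq_add_of_lt (Nat.zero_lt_of_lt hq)
  rw [zero_add] at hq ⊢
  obtain ⟨P, -, hderiv, hroot, hP⟩ := exists_jacobiPhat_succ_eq_eval α n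
  have hα' : 0 < α + 1 := by linarith
  obtain ⟨r, hdeg, hr⟩ := exists_weightDeriv_eq (a := α + 1) (fun i => by positivity) q
  have hdeg' : ((1 - X) * r).natDegree < n := by
    have hX : (1 - X : ℝ[X]).natDegree ≤ 1 := by compute_degree
    exact natDegree_mul_le.trans_lt (by omega)
  have hle : ∀ x ∈ Set.uIcc (-1 : ℝ) 1, x ≤ 1 := fun x hx => by simpa using hx.2
  calc ∫ x in (-1 : ℝ)..1, (1 - x) ^ α * q.eval x * jacobiPhat α (n + 1) x
      = ∫ x in (-1 : ℝ)..1, (1 - x) ^ (α + 1 - 1) * (weightDeriv (α + 1) r).eval x * P.eval x :=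
        intervalIntegral.integral_congr fun x hx => by
          simp only [hP x (hle x hx), hr, add_sub_cancel_right]
    _ = -∫ x in (-1 : ℝ)..1, (1 - x) ^ (α + 1) * r.eval x * (derivative P).eval x :=
        integral_one_sub_rpow_mul_weightDeriv_mul hα' (by norm_num)
          (root_mul_left_of_isRoot r hroot)
    _ = -∫ x in (-1 : ℝ)..1, (1 - x) ^ α * (jacobiPoly α n).eval x * ((1 - X) * r).eval x := by
        congr 1
        refine intervalIntegral.integral_congr fun x hx => ?_
        simp only [hderiv, Real.rpow_add_one' (sub_nonneg.mpr (hle x hx)) hα'.ne', eval_mul,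
          eval_sub, eval_one, eval_X]
        ring
    _ = 0 := by rw [integral_one_sub_rpow_mul_jacobiPoly_mul hα hdeg', neg_zero]

end Jacobi

/-- Weighted orthogonality of the integrated Jacobi polynomials `p̂_j^α` and `p̂_l^α`
for `|j - l| > 2`. -/
theorem intJacobi_orthogonality (α : ℝ) (hα : -1 < α) (j l : ℕ)
    (hj : 1 ≤ j) (hl : 1 ≤ l) (hjl : 2 < |(j : ℤ) - (l : ℤ)|) :
    ∫ x in (-1 : ℝ)..1, (1 - x) ^ α * jacobiPhat α j x * jacobiPhat α l x = 0 := by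
  wlog hlt : j < l generalizing j l
  · simpa only [mul_right_comm] using
      this l j hl hj (abs_sub_comm (j : ℤ) l ▸ hjl) (by grind)
  obtain ⟨P, hdeg, hP⟩ := exists_jacobiPhat_eq_eval α j
  have hdegl : P.natDegree + 2 < l := by grind
  rw [← integral_one_sub_rpow_mul_eval_mul_jacobiPhat hα hdegl]
  refine intervalIntegral.integral_congr fun x hx => ?_
  have hx1 : x ≤ 1 := by simpa using hx.2
  simp only [hP x hx1]
end

section
/- For all continuous functions f : [−1,1] → ℝ and g, h : [0,1] → ℝ, the integral over the reference tetrahedron factorizes under the three-dimensional Duffy transformation: ∫_{T̂₃} f(x/(1−y−z)) g(y/(1−z)) h(z) d(x,y,z) = (∫_{−1}^{1} f(t) dt) · (∫_{0}^{1} (1−s) g(s) ds) · (∫_{0}^{1} (1−t)² h(t) dt). -/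
open MeasureTheory

/-- The reference tetrahedron
`T̂₃ = {(x,y,z) : 0 ≤ z ≤ 1, 0 ≤ y ≤ 1 - z, |x| ≤ 1 - y - z}`,
the convex hull of `(-1,0,0)`, `(1,0,0)`, `(0,1,0)`, `(0,0,1)`. -/
def refTet : Set (ℝ × ℝ × ℝ) :=
  {p | 0 ≤ p.2.2 ∧ p.2.2 ≤ 1 ∧ 0 ≤ p.2.1 ∧ p.2.1 ≤ 1 - p.2.2 ∧ |p.1| ≤ 1 - p.2.1 - p.2.2}

/-!
The Duffy map `(t, s, r) ↦ (t (1 - s) (1 - r), s (1 - r), r)` sends `[-1, 1] × [0, 1) × [0, 1)`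
bijectively onto the tetrahedron with the edge `y + z = 1` removed, a null set. Its derivative is
block triangular with determinant `(1 - s) (1 - r) ^ 2`, and its inverse is
`(x, y, z) ↦ (x / (1 - y - z), y / (1 - z), z)`. The change of variables therefore turns the
integrand into a product of functions of the separate coordinates.
-/

open Set

section BlockTriangular

variable {R M N : Type*} [CommRing R]
  [AddCommGroup M] [Module R M] [Module.Free R M] [Module.Finite R M]
  [AddCommGroup N] [Module R N] [Module.Free R N] [Module.Finite R N]

theorem det_coprod_prod_comp_snd (A : M →ₗ[R] M) (B : N →ₗ[R] M) (C : N →ₗ[R] N) :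
    ((A.coprod B).prod (C ∘ₗ .snd R M N)).det = A.det * C.det := by
  classical
  let b := Module.Free.chooseBasis R M
  let c := Module.Free.chooseBasis R N
  have toMatrix_eq : LinearMap.toMatrix (b.prod c) (b.prod c)
      ((A.coprod B).prod (C ∘ₗ .snd R M N)) =
      .fromBlocks (A.toMatrix b b) (B.toMatrix c b) 0 (C.toMatrix c c) := by
    ext (i | i) (j | j) <;> simp [LinearMap.toMatrix_apply]
  rw [← LinearMap.det_toMatrix (b.prod c), toMatrix_eq, Matrix.det_fromBlocks_zero₂₁,
    LinearMap.det_toMatrix, LinearMap.det_toMatrix]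

end BlockTriangular

/-- The three-dimensional Duffy transformation, collapsing a box onto the reference tetrahedron. -/
def duffyMap (p : ℝ × ℝ × ℝ) : ℝ × ℝ × ℝ :=
  (p.1 * ((1 - p.2.1) * (1 - p.2.2)), p.2.1 * (1 - p.2.2), p.2.2)

/-- The inverse of the Duffy transformation, meaningful off the edge `y + z = 1`, where the
divisions by zero return `0`. -/
noncomputable def duffyInv (p : ℝ × ℝ × ℝ) : ℝ × ℝ × ℝ :=
  (p.1 / (1 - p.2.1 - p.2.2), p.2.1 / (1 - p.2.2), p.2.2)

/-- The box `[-1, 1] × [0, 1) × [0, 1)`. The faces `s = 1` and `r = 1`, on which the Duffy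
transformation is not injective, are left out. -/
def duffyBox : Set (ℝ × ℝ × ℝ) :=
  Icc (-1) 1 ×ˢ Ico 0 1 ×ˢ Ico 0 1

/-- The reference tetrahedron without the edge `y + z = 1`, onto which the Duffy transformation
collapses the face `s = 1`. -/
def refTetOffEdge : Set (ℝ × ℝ × ℝ) :=
  refTet \ {p | p.2.1 + p.2.2 = 1}

/-- The derivative of the Duffy transformation, written as a block triangular map in order to
exhibit its determinant. -/
def duffyDeriv (p : ℝ × ℝ × ℝ) : ℝ × ℝ × ℝ →L[ℝ] ℝ × ℝ × ℝ :=
  let planar : ℝ × ℝ →L[ℝ] ℝ × ℝ :=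
    (((1 - p.2.2) • ContinuousLinearMap.id ℝ ℝ).coprod (-p.2.1 • .id ℝ ℝ)).prod
      (.id ℝ ℝ ∘L .snd ℝ ℝ ℝ)
  ((((1 - p.2.1) * (1 - p.2.2)) • ContinuousLinearMap.id ℝ ℝ).coprod
    (((-p.1 * (1 - p.2.2)) • ContinuousLinearMap.id ℝ ℝ).coprod
      ((-p.1 * (1 - p.2.1)) • .id ℝ ℝ))).prod (planar ∘L .snd ℝ ℝ (ℝ × ℝ))

theorem measurableSet_duffyBox : MeasurableSet duffyBox :=
  measurableSet_Icc.prod (measurableSet_Ico.prod measurableSet_Ico)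

theorem hasFDerivAt_duffyMap (p : ℝ × ℝ × ℝ) : HasFDerivAt duffyMap (duffyDeriv p) p := by
  have ht : HasFDerivAt (fun q : ℝ × ℝ × ℝ ↦ q.1) (.fst ℝ ℝ (ℝ × ℝ)) p := hasFDerivAt_fst
  have hs : HasFDerivAt (fun q : ℝ × ℝ × ℝ ↦ q.2.1) (.fst ℝ ℝ ℝ ∘L .snd ℝ ℝ (ℝ × ℝ)) p :=
    hasFDerivAt_snd.fst
  have hr : HasFDerivAt (fun q : ℝ × ℝ × ℝ ↦ q.2.2) (.snd ℝ ℝ ℝ ∘L .snd ℝ ℝ (ℝ × ℝ)) p :=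
    hasFDerivAt_snd.snd
  refine ((ht.mul ((hs.const_sub 1).mul (hr.const_sub 1))).prodMk
    ((hs.mul (hr.const_sub 1)).prodMk hr)).congr_fderiv ?_
  ext <;> simp [duffyDeriv]

theorem det_duffyDeriv (p : ℝ × ℝ × ℝ) :
    (duffyDeriv p).det = (1 - p.2.1) * (1 - p.2.2) ^ 2 := by
  simp only [ContinuousLinearMap.det, duffyDeriv, ContinuousLinearMap.coe_prod,
    ContinuousLinearMap.coe_coprod, ContinuousLinearMap.toLinearMap_comp,
    ContinuousLinearMap.coe_snd, det_coprod_prod_comp_snd, LinearMap.det_ring,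
    ContinuousLinearMap.toLinearMap_smul, ContinuousLinearMap.coe_id, LinearMap.smul_apply,
    LinearMap.id_coe, id_eq, smul_eq_mul, mul_one]
  ring

theorem mem_refTetOffEdge_iff {x y z : ℝ} :
    (x, y, z) ∈ refTetOffEdge ↔ 0 ≤ z ∧ 0 ≤ y ∧ 0 < 1 - y - z ∧ |x| ≤ 1 - y - z := by
  constructor
  · rintro ⟨⟨hz, -, hy, hyz, hx⟩, off_edge⟩
    have hyz_lt : y + z < 1 := (le_sub_iff_add_le.1 hyz).lt_of_ne off_edge
    exact ⟨hz, hy, by linarith, hx⟩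
  · rintro ⟨hz, hy, hyz, hx⟩
    have hyz_lt : y + z < 1 := by linarith
    exact ⟨⟨hz, by linarith, hy, by linarith, hx⟩, hyz_lt.ne⟩

theorem one_sub_mul_one_sub_sub {R : Type*} [CommRing R] (s r : R) :
    1 - s * (1 - r) - r = (1 - s) * (1 - r) := by
  ring

theorem mapsTo_duffyMap : MapsTo duffyMap duffyBox refTetOffEdge := by
  rintro ⟨t, s, r⟩ ⟨ht, ⟨hs₀, hs₁⟩, hr₀, hr₁⟩
  have hr : 0 < 1 - r := sub_pos.2 hr₁
  have hsr : 0 < (1 - s) * (1 - r) := mul_pos (sub_pos.2 hs₁) hr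
  rw [duffyMap, mem_refTetOffEdge_iff, one_sub_mul_one_sub_sub, abs_mul, abs_of_pos hsr]
  exact ⟨hr₀, mul_nonneg hs₀ hr.le, hsr, mul_le_of_le_one_left hsr.le (abs_le.2 ht)⟩

theorem mapsTo_duffyInv : MapsTo duffyInv refTetOffEdge duffyBox := by
  rintro ⟨x, y, z⟩ hp
  obtain ⟨hz, hy, hyz, hx⟩ := mem_refTetOffEdge_iff.1 hp
  have hz_lt : z < 1 := by linarith
  have hy_lt : y < 1 - z := by linarith
  have abs_div_le : |x / (1 - y - z)| ≤ 1 := by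
    rw [abs_div, abs_of_pos hyz]
    exact div_le_one_of_le₀ hx hyz.le
  have hz' : 0 < 1 - z := sub_pos.2 hz_lt
  exact ⟨abs_le.1 abs_div_le, ⟨div_nonneg hy hz'.le, (div_lt_one hz').2 hy_lt⟩, hz, hz_lt⟩

theorem leftInvOn_duffyInv_duffyMap : LeftInvOn duffyInv duffyMap duffyBox := by
  rintro ⟨t, s, r⟩ ⟨-, ⟨-, hs⟩, -, hr⟩
  have hs' : 1 - s ≠ 0 := (sub_pos.2 hs).ne'
  have hr' : 1 - r ≠ 0 := (sub_pos.2 hr).ne'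
  simp [duffyInv, duffyMap, one_sub_mul_one_sub_sub, hs', hr']

theorem rightInvOn_duffyInv_duffyMap : RightInvOn duffyInv duffyMap refTetOffEdge := by
  rintro ⟨x, y, z⟩ hp
  obtain ⟨-, hy, hyz, -⟩ := mem_refTetOffEdge_iff.1 hp
  have hz : 1 - z ≠ 0 := by linarith
  have scale : (1 - y / (1 - z)) * (1 - z) = 1 - y - z := by
    rw [sub_mul, div_mul_cancel₀ _ hz]
    ring
  simp [duffyInv, duffyMap, scale, hz, hyz.ne']

theorem bijOn_duffyMap : BijOn duffyMap duffyBox refTetOffEdge :=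
  InvOn.bijOn ⟨leftInvOn_duffyInv_duffyMap, rightInvOn_duffyInv_duffyMap⟩
    mapsTo_duffyMap mapsTo_duffyInv

theorem refTetOffEdge_ae_eq_refTet : refTetOffEdge =ᵐ[volume] refTet := by
  have edge_subset : refTet ∩ {p | p.2.1 + p.2.2 = 1} ⊆ {0} ×ˢ univ := by
    rintro ⟨x, y, z⟩ ⟨⟨-, -, -, -, hx⟩, hyz : y + z = 1⟩
    have hx_le : |x| ≤ 0 := hx.trans_eq (by linarith)
    exact ⟨abs_nonpos_iff.1 hx_le, mem_univ _⟩
  have volume_plane : volume (({0} : Set ℝ) ×ˢ (univ : Set (ℝ × ℝ))) = 0 := by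
    rw [Measure.volume_eq_prod, Measure.prod_prod, Real.volume_singleton, zero_mul]
  exact sdiff_ae_eq_self.2 (measure_mono_null edge_subset volume_plane)

theorem image_duffyMap_ae_eq_refTet : duffyMap '' duffyBox =ᵐ[volume] refTet := by
  rw [bijOn_duffyMap.image_eq]
  exact refTetOffEdge_ae_eq_refTet

section ChangeOfVariables

variable {E : Type*} [NormedAddCommGroup E] [NormedSpace ℝ E]

instance : Measure.IsAddHaarMeasure (volume : Measure (ℝ × ℝ × ℝ)) :=
  Measure.prod.instIsAddHaarMeasure _ _

theorem eqOn_abs_det_duffyDeriv_smul_comp (F : ℝ × ℝ × ℝ → E) :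
    EqOn (fun p ↦ |(duffyDeriv p).det| • F (duffyInv (duffyMap p)))
      (fun p ↦ ((1 - p.2.1) * (1 - p.2.2) ^ 2) • F p) duffyBox := by
  intro p hp
  have det_nonneg : 0 ≤ (1 - p.2.1) * (1 - p.2.2) ^ 2 :=
    mul_nonneg (sub_nonneg.2 hp.2.1.2.le) (sq_nonneg _)
  simp only [det_duffyDeriv, abs_of_nonneg det_nonneg, leftInvOn_duffyInv_duffyMap hp]

theorem integrableOn_refTet_comp_duffyInv_iff (F : ℝ × ℝ × ℝ → E) :
    IntegrableOn (fun p ↦ F (duffyInv p)) refTet ↔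
      IntegrableOn (fun p ↦ ((1 - p.2.1) * (1 - p.2.2) ^ 2) • F p) duffyBox := by
  rw [integrableOn_congr_set_ae image_duffyMap_ae_eq_refTet.symm,
    integrableOn_image_iff_integrableOn_abs_det_fderiv_smul volume measurableSet_duffyBox
      (fun p _ ↦ (hasFDerivAt_duffyMap p).hasFDerivWithinAt) bijOn_duffyMap.injOn,
    integrableOn_congr_fun (eqOn_abs_det_duffyDeriv_smul_comp F) measurableSet_duffyBox]

theorem setIntegral_refTet_comp_duffyInv (F : ℝ × ℝ × ℝ → E) :
    ∫ p in refTet, F (duffyInv p) =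
      ∫ p in duffyBox, ((1 - p.2.1) * (1 - p.2.2) ^ 2) • F p := by
  rw [setIntegral_congr_set image_duffyMap_ae_eq_refTet.symm,
    integral_image_eq_integral_abs_det_fderiv_smul volume measurableSet_duffyBox
      (fun p _ ↦ (hasFDerivAt_duffyMap p).hasFDerivWithinAt) bijOn_duffyMap.injOn,
    setIntegral_congr_fun measurableSet_duffyBox (eqOn_abs_det_duffyDeriv_smul_comp F)]

end ChangeOfVariables

section Product

variable {𝕜 : Type*} [RCLike 𝕜]

theorem integrableOn_duffyBox_mul {u v w : ℝ → 𝕜} (hu : IntervalIntegrable u volume (-1) 1)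
    (hv : IntervalIntegrable v volume 0 1) (hw : IntervalIntegrable w volume 0 1) :
    IntegrableOn (fun p ↦ u p.1 * (v p.2.1 * w p.2.2)) duffyBox := by
  rw [intervalIntegrable_iff_integrableOn_Icc_of_le (by norm_num)] at hu
  rw [intervalIntegrable_iff_integrableOn_Ico_of_le zero_le_one] at hv hw
  rw [duffyBox, IntegrableOn, Measure.volume_eq_prod, ← Measure.prod_restrict,
    Measure.volume_eq_prod, ← Measure.prod_restrict]
  exact Integrable.mul_prod hu (Integrable.mul_prod hv hw)

theorem setIntegral_duffyBox_mul (u v w : ℝ → 𝕜) :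
    ∫ p in duffyBox, u p.1 * (v p.2.1 * w p.2.2) =
      (∫ t in (-1)..1, u t) * ((∫ s in 0..1, v s) * ∫ r in 0..1, w r) := by
  rw [duffyBox, Measure.volume_eq_prod, setIntegral_prod_mul u fun q : ℝ × ℝ ↦ v q.1 * w q.2,
    Measure.volume_eq_prod, setIntegral_prod_mul v w, integral_Icc_eq_integral_Ioc,
    integral_Ico_eq_integral_Ioc, integral_Ico_eq_integral_Ioc,
    intervalIntegral.integral_of_le (by norm_num), intervalIntegral.integral_of_le zero_le_one,
    intervalIntegral.integral_of_le zero_le_one]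

theorem duffy_tetrahedron_general {f g h : ℝ → 𝕜} (hf : IntervalIntegrable f volume (-1) 1)
    (hg : IntervalIntegrable (fun s ↦ (1 - s) • g s) volume 0 1)
    (hh : IntervalIntegrable (fun r ↦ (1 - r) ^ 2 • h r) volume 0 1) :
    IntegrableOn (fun p : ℝ × ℝ × ℝ ↦
        f (p.1 / (1 - p.2.1 - p.2.2)) * g (p.2.1 / (1 - p.2.2)) * h p.2.2) refTet ∧
      ∫ p in refTet, f (p.1 / (1 - p.2.1 - p.2.2)) * g (p.2.1 / (1 - p.2.2)) * h p.2.2 =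
        (∫ t in (-1)..1, f t) * (∫ s in 0..1, (1 - s) • g s) * ∫ r in 0..1, (1 - r) ^ 2 • h r := by
  let F : ℝ × ℝ × ℝ → 𝕜 := fun p ↦ f p.1 * g p.2.1 * h p.2.2
  have separated : (fun p ↦ ((1 - p.2.1) * (1 - p.2.2) ^ 2) • F p) =
      fun p ↦ f p.1 * ((1 - p.2.1) • g p.2.1 * (1 - p.2.2) ^ 2 • h p.2.2) := by
    funext p
    simp only [F, RCLike.real_smul_eq_coe_mul, RCLike.ofReal_mul]
    ring
  constructor
  · refine (integrableOn_refTet_comp_duffyInv_iff F).2 ?_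
    rw [separated]
    exact integrableOn_duffyBox_mul hf hg hh
  · refine (setIntegral_refTet_comp_duffyInv F).trans ?_
    rw [separated, mul_assoc]
    exact setIntegral_duffyBox_mul f (fun s ↦ (1 - s) • g s) (fun r ↦ (1 - r) ^ 2 • h r)

end Product

/-- Factorization of integrals over the reference tetrahedron under the
three-dimensional Duffy transformation. -/
theorem duffy_tetrahedron (f g h : ℝ → ℝ)
    (hf : ContinuousOn f (Set.Icc (-1 : ℝ) 1)) (hg : ContinuousOn g (Set.Icc (0 : ℝ) 1))
    (hh : ContinuousOn h (Set.Icc (0 : ℝ) 1)) :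
    ∫ p in refTet, f (p.1 / (1 - p.2.1 - p.2.2)) * g (p.2.1 / (1 - p.2.2)) * h p.2.2
      = (∫ t in (-1 : ℝ)..1, f t) * (∫ s in (0 : ℝ)..1, (1 - s) * g s)
          * ∫ t in (0 : ℝ)..1, (1 - t) ^ 2 * h t :=
  (duffy_tetrahedron_general (hf.intervalIntegrable_of_Icc (by norm_num))
    (ContinuousOn.intervalIntegrable_of_Icc zero_le_one (by fun_prop))
    (ContinuousOn.intervalIntegrable_of_Icc zero_le_one (by fun_prop))).2
end

section
/- For integers i ≥ 1 and j ≥ 0, the normal trace of the face basis function φ_{ij} := −∇u_{i+1} × ∇v_{(i+1)(j+1)} on the bottom face of the reference tetrahedron satisfies the identity (φ_{ij}(x,y,0)) · (0,0,−1) = 2 p_i^0(x/(1−y)) (1−y)^i p_j^{2i+1}(2y−1) for all (x,y) with 0 < y < 1 and |x| < 1−y. -/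
open MeasureTheory

/-- Partial derivative in the first coordinate. -/
noncomputable def pdx (f : ℝ × ℝ × ℝ → ℝ) (p : ℝ × ℝ × ℝ) : ℝ :=
  deriv (fun x => f (x, p.2.1, p.2.2)) p.1

/-- Partial derivative in the second coordinate. -/
noncomputable def pdy (f : ℝ × ℝ × ℝ → ℝ) (p : ℝ × ℝ × ℝ) : ℝ :=
  deriv (fun y => f (p.1, y, p.2.2)) p.2.1

/-- Partial derivative in the third coordinate. -/
noncomputable def pdz (f : ℝ × ℝ × ℝ → ℝ) (p : ℝ × ℝ × ℝ) : ℝ :=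
  deriv (fun z => f (p.1, p.2.1, z)) p.2.2

/-- Gradient of a scalar field on `ℝ³`. -/
noncomputable def grad3 (f : ℝ × ℝ × ℝ → ℝ) (p : ℝ × ℝ × ℝ) : ℝ × ℝ × ℝ :=
  (pdx f p, pdy f p, pdz f p)

/-- Cross product on `ℝ³`. -/
noncomputable def cross3 (a b : ℝ × ℝ × ℝ) : ℝ × ℝ × ℝ :=
  (a.2.1 * b.2.2 - a.2.2 * b.2.1, a.2.2 * b.1 - a.1 * b.2.2, a.1 * b.2.1 - a.2.1 * b.1)

/-- Euclidean dot product on `ℝ³`. -/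
noncomputable def dot3 (a b : ℝ × ℝ × ℝ) : ℝ :=
  a.1 * b.1 + a.2.1 * b.2.1 + a.2.2 * b.2.2

/-- The scalar field `u_i(x,y,z) = p̂_i^0(x/(1-y-z)) (1-y-z)^i`. -/
noncomputable def uFun (i : ℕ) (p : ℝ × ℝ × ℝ) : ℝ :=
  jacobiPhat 0 i (p.1 / (1 - p.2.1 - p.2.2)) * (1 - p.2.1 - p.2.2) ^ i

/-- The scalar field `v_{ij}(x,y,z) = p̂_j^{2i-1}((2y+z-1)/(1-z)) (1-z)^j`. -/
noncomputable def vFun (i j : ℕ) (p : ℝ × ℝ × ℝ) : ℝ :=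
  jacobiPhat (2 * (i : ℝ) - 1) j ((2 * p.2.1 + p.2.2 - 1) / (1 - p.2.2)) * (1 - p.2.2) ^ j

/-- The face basis function `φ_{ij} = -∇u_{i+1} × ∇v_{(i+1)(j+1)}` (for `i ≥ 1`). -/
noncomputable def phiFace (i j : ℕ) (p : ℝ × ℝ × ℝ) : ℝ × ℝ × ℝ :=
  -cross3 (grad3 (uFun (i + 1)) p) (grad3 (vFun (i + 1) (j + 1)) p)

/-!
Since `v` does not depend on `x`, the normal trace is the single product `∂ₓu · ∂_y v`. By the
fundamental theorem of calculus `p̂_{n+1}^α` is a primitive of `p_n^α`, so each factor is a chain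
rule computation in which the derivative of the homogenised argument cancels one power of
`1 - y - z` (resp. `1 - z`). All of this takes place on the half line `x < 1`, where the Rodrigues
weight `(1 - x)^α` is smooth and nonvanishing.
-/

open Set

theorem contDiffOn_rodrigues (α : ℝ) (n : ℕ) :
    ContDiffOn ℝ n (fun t : ℝ => (1 - t) ^ α * (t ^ 2 - 1) ^ n) (Iio 1) := by
  have one_sub_ne : ∀ t ∈ Iio (1 : ℝ), 1 - t ≠ 0 := fun _ ht => (sub_pos.mpr ht).ne'
  have weight : ContDiffOn ℝ n (fun t : ℝ => (1 - t) ^ α) (Iio 1) :=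
    ContDiffOn.rpow_const_of_ne (by fun_prop) one_sub_ne
  exact weight.mul (by fun_prop)

theorem continuousOn_jacobiP (α : ℝ) (n : ℕ) : ContinuousOn (jacobiP α n) (Iio 1) := by
  have one_sub_pos : ∀ t ∈ Iio (1 : ℝ), 0 < 1 - t := fun _ ht => sub_pos.mpr ht
  have weight : ContinuousOn (fun t : ℝ => (1 - t) ^ α) (Iio 1) :=
    ContinuousOn.rpow_const (by fun_prop) fun t ht => Or.inl (one_sub_pos t ht).ne'
  have prefactor : ContinuousOn
      (fun t : ℝ => 1 / (2 ^ n * (n.factorial : ℝ) * (1 - t) ^ α)) (Iio 1) := by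
    refine continuousOn_const.div (continuousOn_const.mul weight) fun t ht => ?_
    have := Real.rpow_pos_of_pos (one_sub_pos t ht) α
    positivity
  have derivative : ContinuousOn
      (iteratedDeriv n fun t : ℝ => (1 - t) ^ α * (t ^ 2 - 1) ^ n) (Iio 1) :=
    ((contDiffOn_rodrigues α n).continuousOn_iteratedDerivWithin le_rfl
      isOpen_Iio.uniqueDiffOn).congr fun _ ht => (iteratedDerivWithin_of_isOpen isOpen_Iio ht).symm
  exact prefactor.mul derivative

theorem jacobiPhat_succ (α : ℝ) (n : ℕ) :
    jacobiPhat α (n + 1) = fun x => ∫ ξ in (-1 : ℝ)..x, jacobiP α n ξ := by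
  funext x
  simp [jacobiPhat]

theorem hasDerivAt_jacobiPhat_succ (α : ℝ) (n : ℕ) {x : ℝ} (hx : x < 1) :
    HasDerivAt (jacobiPhat α (n + 1)) (jacobiP α n x) x := by
  have cont := continuousOn_jacobiP α n
  have uIcc_subset : uIcc (-1) x ⊆ Iio 1 := ordConnected_Iio.uIcc_subset (by norm_num) hx
  rw [jacobiPhat_succ]
  exact intervalIntegral.integral_hasDerivAt_right (cont.mono uIcc_subset).intervalIntegrable
    (cont.stronglyMeasurableAtFilter isOpen_Iio x hx) (cont.continuousAt (Iio_mem_nhds hx))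

theorem pdx_uFun_succ (i : ℕ) {x y z : ℝ} (hyz : y + z < 1) (hxyz : x + y + z < 1) :
    pdx (uFun (i + 1)) (x, y, z) = jacobiP 0 i (x / (1 - y - z)) * (1 - y - z) ^ i := by
  have height_pos : 0 < 1 - y - z := by linarith
  have arg_lt : x / (1 - y - z) < 1 := by rw [div_lt_one height_pos]; linarith
  have deriv_arg : HasDerivAt (fun t : ℝ => t / (1 - y - z)) (1 / (1 - y - z)) x :=
    (hasDerivAt_id x).div_const _
  have deriv_u := ((hasDerivAt_jacobiPhat_succ 0 i arg_lt).comp x deriv_arg).mul_const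
    ((1 - y - z) ^ (i + 1))
  calc pdx (uFun (i + 1)) (x, y, z)
      = jacobiP 0 i (x / (1 - y - z)) * (1 / (1 - y - z)) * (1 - y - z) ^ (i + 1) := deriv_u.deriv
    _ = jacobiP 0 i (x / (1 - y - z)) * (1 - y - z) ^ i := by
      field_simp
      ring

theorem pdx_vFun (i j : ℕ) (p : ℝ × ℝ × ℝ) : pdx (vFun i j) p = 0 := by
  simp only [pdx, vFun, deriv_const]

theorem pdy_vFun_succ (i j : ℕ) (x : ℝ) {y z : ℝ} (hz : z < 1) (hyz : y + z < 1) :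
    pdy (vFun i (j + 1)) (x, y, z)
      = 2 * jacobiP (2 * (i : ℝ) - 1) j ((2 * y + z - 1) / (1 - z)) * (1 - z) ^ j := by
  have height_pos : 0 < 1 - z := by linarith
  have arg_lt : (2 * y + z - 1) / (1 - z) < 1 := by rw [div_lt_one height_pos]; linarith
  have deriv_arg : HasDerivAt (fun t : ℝ => (2 * t + z - 1) / (1 - z)) (2 / (1 - z)) y := by
    simpa using ((((hasDerivAt_id y).const_mul 2).add_const z).sub_const 1).div_const (1 - z)
  have deriv_v := ((hasDerivAt_jacobiPhat_succ (2 * (i : ℝ) - 1) j arg_lt).comp y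
    deriv_arg).mul_const ((1 - z) ^ (j + 1))
  calc pdy (vFun i (j + 1)) (x, y, z)
      = jacobiP (2 * (i : ℝ) - 1) j ((2 * y + z - 1) / (1 - z)) * (2 / (1 - z))
          * (1 - z) ^ (j + 1) := deriv_v.deriv
    _ = 2 * jacobiP (2 * (i : ℝ) - 1) j ((2 * y + z - 1) / (1 - z)) * (1 - z) ^ j := by
      field_simp
      ring

theorem dot3_neg_cross3_neg_e3 (a b : ℝ × ℝ × ℝ) :
    dot3 (-cross3 a b) (0, 0, -1) = a.1 * b.2.1 - a.2.1 * b.1 := by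
  simp [dot3, cross3]

theorem dot3_phiFace_neg_e3 (i j : ℕ) (p : ℝ × ℝ × ℝ) :
    dot3 (phiFace i j p) (0, 0, -1) = pdx (uFun (i + 1)) p * pdy (vFun (i + 1) (j + 1)) p := by
  simp only [phiFace, dot3_neg_cross3_neg_e3, grad3, pdx_vFun, mul_zero, sub_zero]

theorem face_basis_normal_trace_general (i j : ℕ) {x y z : ℝ}
    (hz : z < 1) (hyz : y + z < 1) (hxyz : x + y + z < 1) :
    dot3 (phiFace i j (x, y, z)) (0, 0, -1)
      = 2 * jacobiP 0 i (x / (1 - y - z)) * (1 - y - z) ^ i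
          * (jacobiP (2 * (i : ℝ) + 1) j ((2 * y + z - 1) / (1 - z)) * (1 - z) ^ j) := by
  have index_shift : 2 * ((i + 1 : ℕ) : ℝ) - 1 = 2 * (i : ℝ) + 1 := by push_cast; ring
  rw [dot3_phiFace_neg_e3, pdx_uFun_succ i hyz hxyz, pdy_vFun_succ (i + 1) j x hz hyz,
    index_shift]
  ring

/-- The normal trace of `φ_{ij}` on the bottom face of the reference tetrahedron
(with outer unit normal `(0,0,-1)`) equals `2 p_i^0(x/(1-y)) (1-y)^i p_j^{2i+1}(2y-1)`. -/
theorem face_basis_normal_trace (i j : ℕ) (hi : 1 ≤ i) (x y : ℝ)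
    (hy0 : 0 < y) (hy1 : y < 1) (hx : |x| < 1 - y) :
    dot3 (phiFace i j (x, y, 0)) (0, 0, -1)
      = 2 * jacobiP 0 i (x / (1 - y)) * (1 - y) ^ i
          * jacobiP (2 * (i : ℝ) + 1) j (2 * y - 1) := by
  have hxy : x + y + 0 < 1 := by linarith [(abs_lt.mp hx).2]
  simpa using face_basis_normal_trace_general i j one_pos (by linarith) hxy
end

section
/- For every integer k ≥ 2, the highest-order edge basis function φ_k := curl(p̂_{k+1}^0(x/(1−y)) (1−y)^{k+1}) on the reference triangle is L²-orthogonal to all vector-valued polynomials of degree at most k−2: for every polynomial map q : ℝ² → ℝ² whose components have total degree ≤ k−2 one has ∫_{T̂₂} φ_k(x,y) · q(x,y) d(x,y) = 0. -/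
open MeasureTheory

/-- Two-dimensional curl of a scalar field: `curl ψ = (∂_y ψ, -∂_x ψ)`. -/
noncomputable def curl2 (ψ : ℝ × ℝ → ℝ) (p : ℝ × ℝ) : ℝ × ℝ :=
  (deriv (fun y => ψ (p.1, y)) p.2, -deriv (fun x => ψ (x, p.2)) p.1)

/-- Euclidean dot product on `ℝ × ℝ`. -/
noncomputable def dot2 (a b : ℝ × ℝ) : ℝ := a.1 * b.1 + a.2 * b.2

/-- The reference triangle `T̂₂`, the convex hull of `(-1,0)`, `(1,0)`, `(0,1)`. -/
def refTriangle : Set (ℝ × ℝ) := {p | 0 ≤ p.2 ∧ p.2 ≤ 1 ∧ |p.1| ≤ 1 - p.2}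

/-- The highest-order edge basis function
`φ_k = curl (p̂_{k+1}^0(x/(1-y)) (1-y)^{k+1})`. -/
noncomputable def phiTop (k : ℕ) : ℝ × ℝ → ℝ × ℝ :=
  curl2 fun q => jacobiPhat 0 (k + 1) (q.1 / (1 - q.2)) * (1 - q.2) ^ (k + 1)

/-!
On a horizontal slice of the triangle put `s = 1 - y` and `t = x / s ∈ [-1, 1]`. With `P` the
Legendre polynomial of degree `k` and `L` its antiderivative vanishing at `-1`, the field `φ_k`
equals `s ^ k * (t P(t) - (k + 1) L(t), -P(t))` there. Up to a factor, `P` and `L` are the `k`-th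
and `(k-1)`-st derivatives of `(X ^ 2 - 1) ^ k`, so repeated integration by parts makes them
orthogonal on `[-1, 1]` to all polynomials of degree `< k` and `< k - 1`, and `X * P` inherits
orthogonality to degree `< k - 1`. Hence already the integral over each slice vanishes, and only
the degrees in `x` of the two components of the test polynomial matter.
-/

theorem setIntegral_prod_eq_zero_of_ae_slice {α β E : Type*} [MeasurableSpace α]
    [MeasurableSpace β] [NormedAddCommGroup E] [NormedSpace ℝ E] {μ : Measure α} {ν : Measure β}
    [SFinite μ] [SFinite ν] {f : α × β → E} {s : Set (α × β)} (hs : MeasurableSet s)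
    (hf : ∀ᵐ y ∂ν, ∫ x in (fun x => (x, y)) ⁻¹' s, f (x, y) ∂μ = 0) :
    ∫ p in s, f p ∂μ.prod ν = 0 := by
  by_cases hint : IntegrableOn f s (μ.prod ν)
  · rw [← integral_indicator hs, integral_prod_symm _ (hint.integrable_indicator hs)]
    refine integral_eq_zero_of_ae (hf.mono fun y hy => ?_)
    rw [Pi.zero_apply, ← hy, ← integral_indicator (measurable_prodMk_right hs)]
    rfl
  · exact integral_undef hint

theorem measurableSet_refTriangle : MeasurableSet refTriangle := by
  unfold refTriangle
  measurability

theorem refTriangle_slice {y : ℝ} (hy : y ∈ Set.Icc 0 1) :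
    (fun x => (x, y)) ⁻¹' refTriangle = Set.Icc (-(1 - y)) (1 - y) := by
  ext x
  simp [refTriangle, hy.1, hy.2, abs_le]

theorem refTriangle_slice_eq_empty {y : ℝ} (hy : y ∉ Set.Icc 0 1) :
    (fun x => (x, y)) ⁻¹' refTriangle = ∅ :=
  Set.eq_empty_of_forall_notMem fun _ hx => hy ⟨hx.1, hx.2.1⟩

theorem setIntegral_refTriangle_eq_zero_of_slice {E : Type*} [NormedAddCommGroup E]
    [NormedSpace ℝ E] {f : ℝ × ℝ → E}
    (hf : ∀ y ∈ Set.Icc (0 : ℝ) 1, ∫ x in (-(1 - y))..(1 - y), f (x, y) = 0) :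
    ∫ p in refTriangle, f p = 0 := by
  refine setIntegral_prod_eq_zero_of_ae_slice measurableSet_refTriangle (.of_forall fun y => ?_)
  by_cases hy : y ∈ Set.Icc (0 : ℝ) 1
  · rw [refTriangle_slice hy, integral_Icc_eq_integral_Ioc,
      ← intervalIntegral.integral_of_le (by linarith [hy.2]), hf y hy]
  · rw [refTriangle_slice_eq_empty hy, setIntegral_empty]

section

open Polynomial

section RestrictionToLine

variable {R : Type*} [CommSemiring R]

/-- The restriction `x ↦ q(x, y)` of a bivariate polynomial to the horizontal line at height
`y`; it carries univariate orthogonality relations over to the slices of the triangle. -/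
noncomputable def horizontalRestriction (q : MvPolynomial (Fin 2) R) (y : R) : R[X] :=
  (MvPolynomial.finSuccEquiv R 1 q).map (MvPolynomial.eval ![y])

theorem eval_horizontalRestriction (q : MvPolynomial (Fin 2) R) (x y : R) :
    (horizontalRestriction q y).eval x = MvPolynomial.eval ![x, y] q :=
  (MvPolynomial.eval_eq_eval_mv_eval' ![y] x q).symm

theorem degree_horizontalRestriction_le (q : MvPolynomial (Fin 2) R) (y : R) :
    (horizontalRestriction q y).degree ≤ q.degreeOf 0 :=
  calc (horizontalRestriction q y).degree
      ≤ (MvPolynomial.finSuccEquiv R 1 q).degree := degree_map_le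
    _ ≤ (MvPolynomial.finSuccEquiv R 1 q).natDegree := degree_le_natDegree
    _ = q.degreeOf 0 := by rw [MvPolynomial.natDegree_finSuccEquiv]

end RestrictionToLine

section OrthogonalPolynomials

theorem degree_derivative_lt_of_degree_lt_succ {R : Type*} [Semiring R] {q : R[X]} {n : ℕ}
    (hq : q.degree < (n + 1 : ℕ)) : (derivative q).degree < n := by
  rw [degree_lt_iff_coeff_zero] at hq ⊢
  intro i hi
  rw [coeff_derivative, hq (i + 1) (by lia), zero_mul]

/-- The real polynomials that are `L²(a, b)`-orthogonal to every polynomial of degree `< n`. The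
oriented integral is used, so `a ≤ b` is not required. -/
noncomputable def orthogonalDegreeLT (a b : ℝ) (n : ℕ) : Submodule ℝ ℝ[X] where
  carrier := {p | ∀ q : ℝ[X], q.degree < n → ∫ t in a..b, p.eval t * q.eval t = 0}
  zero_mem' q _ := by simp
  add_mem' {p r} hp hr q hq := by
    have integrable_mul (f : ℝ[X]) :
        IntervalIntegrable (fun t => f.eval t * q.eval t) volume a b :=
      (f.continuous.mul q.continuous).intervalIntegrable a b
    simp only [eval_add, add_mul]
    rw [intervalIntegral.integral_add (integrable_mul p) (integrable_mul r), hp q hq, hr q hq,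
      add_zero]
  smul_mem' c p hp q hq := by
    simp only [eval_smul, smul_eq_mul, mul_assoc]
    rw [intervalIntegral.integral_const_mul, hp q hq, mul_zero]

variable {a b : ℝ} {n : ℕ} {p q : ℝ[X]}

theorem X_mul_mem_orthogonalDegreeLT (hp : p ∈ orthogonalDegreeLT a b (n + 1)) :
    X * p ∈ orthogonalDegreeLT a b n := by
  intro q hq
  have degree_X_mul : (X * q : ℝ[X]).degree < (n + 1 : ℕ) := by
    rw [degree_lt_iff_coeff_zero] at hq ⊢
    rintro (_ | i) hi
    · simp
    · simpa using hq i (by lia)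
  simpa [mul_assoc, mul_left_comm] using hp (X * q) degree_X_mul

theorem derivative_mem_orthogonalDegreeLT (hp : p ∈ orthogonalDegreeLT a b n)
    (ha : p.eval a = 0) (hb : p.eval b = 0) :
    derivative p ∈ orthogonalDegreeLT a b (n + 1) := by
  intro q hq
  calc ∫ t in a..b, (derivative p).eval t * q.eval t
      = ∫ t in a..b, q.eval t * (derivative p).eval t := by simp only [mul_comm]
    _ = q.eval b * p.eval b - q.eval a * p.eval a
          - ∫ t in a..b, (derivative q).eval t * p.eval t :=
        intervalIntegral.integral_mul_deriv_eq_deriv_mul (fun t _ => q.hasDerivAt t)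
          (fun t _ => p.hasDerivAt t) ((derivative q).continuous.intervalIntegrable a b)
          ((derivative p).continuous.intervalIntegrable a b)
    _ = -∫ t in a..b, p.eval t * (derivative q).eval t := by simp [ha, hb, mul_comm]
    _ = 0 := by rw [hp _ (degree_derivative_lt_of_degree_lt_succ hq), neg_zero]

theorem iterate_derivative_mem_orthogonalDegreeLT
    (hp : ((X - C a) * (X - C b)) ^ n ∣ p) : derivative^[n] p ∈ orthogonalDegreeLT a b n := by
  induction n with
  | zero =>
    intro q hq
    have hq0 : q = 0 := by simpa using hq
    simp [hq0]
  | succ n ih =>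
    have hdvd : (X - C a) * (X - C b) ∣ derivative^[n] p := by
      simpa using pow_sub_dvd_iterate_derivative_of_pow_dvd n hp
    rw [Function.iterate_succ_apply']
    exact derivative_mem_orthogonalDegreeLT (ih ((pow_dvd_pow _ n.le_succ).trans hp))
      (eval_eq_zero_of_dvd_of_eval_eq_zero hdvd (by simp))
      (eval_eq_zero_of_dvd_of_eval_eq_zero hdvd (by simp))

theorem integral_eval_div_mul_eval_eq_zero (hp : p ∈ orthogonalDegreeLT a b n)
    (hq : q.degree < n) (s : ℝ) :
    ∫ x in (s * a)..(s * b), p.eval (x / s) * q.eval x = 0 := by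
  rcases eq_or_ne s 0 with rfl | hs
  · simp
  have degree_comp : (q.comp (C s * X)).degree < n := by
    rw [degree_lt_iff_coeff_zero] at hq ⊢
    intro i hi
    rw [comp_C_mul_X_coeff, hq i hi, zero_mul]
  calc ∫ x in (s * a)..(s * b), p.eval (x / s) * q.eval x
      = ∫ x in (s * a)..(s * b), p.eval (x / s) * (q.comp (C s * X)).eval (x / s) := by
        simp [mul_div_cancel₀ _ hs]
    _ = s • ∫ t in a..b, p.eval t * (q.comp (C s * X)).eval t := by
        rw [intervalIntegral.integral_comp_div
          (fun t => p.eval t * (q.comp (C s * X)).eval t) hs, mul_div_cancel_left₀ a hs,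
          mul_div_cancel_left₀ b hs]
    _ = 0 := by rw [hp _ degree_comp, smul_zero]

end OrthogonalPolynomials

/-- The Legendre polynomial `p_n^0`, as an element of `ℝ[X]`. -/
noncomputable def legendre (n : ℕ) : ℝ[X] :=
  (1 / (2 ^ n * (n.factorial : ℝ))) • derivative^[n] ((X ^ 2 - 1) ^ n)

/-- The integrated Legendre polynomial `p̂_{n+2}^0`, the antiderivative of `p_{n+1}^0` vanishing at
`-1`; the index is the number of derivatives in its Rodrigues formula. -/
noncomputable def integratedLegendre (n : ℕ) : ℝ[X] :=
  (1 / (2 ^ (n + 1) * ((n + 1).factorial : ℝ))) • derivative^[n] ((X ^ 2 - 1) ^ (n + 1))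

theorem derivative_integratedLegendre (n : ℕ) :
    derivative (integratedLegendre n) = legendre (n + 1) := by
  rw [integratedLegendre, legendre, derivative_smul, Function.iterate_succ_apply']

theorem iterate_derivative_sq_sub_one_pow_mem_orthogonalDegreeLT {m n : ℕ} (hmn : m ≤ n) :
    derivative^[m] ((X ^ 2 - 1 : ℝ[X]) ^ n) ∈ orthogonalDegreeLT (-1) 1 m := by
  apply iterate_derivative_mem_orthogonalDegreeLT
  have factor : (X - C (-1)) * (X - C 1) = (X ^ 2 - 1 : ℝ[X]) := by
    simp only [map_neg, map_one]
    ring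
  rw [factor]
  exact pow_dvd_pow _ hmn

theorem legendre_mem_orthogonalDegreeLT (n : ℕ) :
    legendre n ∈ orthogonalDegreeLT (-1) 1 n :=
  Submodule.smul_mem _ _ (iterate_derivative_sq_sub_one_pow_mem_orthogonalDegreeLT le_rfl)

theorem integratedLegendre_mem_orthogonalDegreeLT (n : ℕ) :
    integratedLegendre n ∈ orthogonalDegreeLT (-1) 1 n :=
  Submodule.smul_mem _ _ (iterate_derivative_sq_sub_one_pow_mem_orthogonalDegreeLT n.le_succ)

theorem integratedLegendre_eval_neg_one (n : ℕ) : (integratedLegendre n).eval (-1) = 0 := by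
  have hdvd : (X ^ 2 - 1 : ℝ[X]) ∣ derivative^[n] ((X ^ 2 - 1) ^ (n + 1)) := by
    simpa using pow_sub_dvd_iterate_derivative_pow (X ^ 2 - 1 : ℝ[X]) (n + 1) n
  rw [integratedLegendre, eval_smul,
    eval_eq_zero_of_dvd_of_eval_eq_zero hdvd (by simp), smul_zero]

theorem iteratedDeriv_polynomial_eval {𝕜 : Type*} [NontriviallyNormedField 𝕜] (p : 𝕜[X])
    (n : ℕ) :
    iteratedDeriv n (fun t => p.eval t) = fun t => (derivative^[n] p).eval t := by
  induction n with
  | zero => simp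
  | succ n ih =>
    ext t
    rw [iteratedDeriv_succ, ih, Function.iterate_succ_apply', Polynomial.deriv]

theorem jacobiP_zero_eq_eval_legendre (n : ℕ) (x : ℝ) :
    jacobiP 0 n x = (legendre n).eval x := by
  have weight_eq : (fun t : ℝ => (1 - t) ^ (0 : ℝ) * (t ^ 2 - 1) ^ n) =
      fun t => ((X ^ 2 - 1 : ℝ[X]) ^ n).eval t := by
    ext t
    simp
  rw [jacobiP, weight_eq, iteratedDeriv_polynomial_eval, legendre, eval_smul, smul_eq_mul,
    Real.rpow_zero, mul_one]

theorem jacobiPhat_zero_eq_eval_integratedLegendre (n : ℕ) (x : ℝ) :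
    jacobiPhat 0 (n + 2) x = (integratedLegendre n).eval x := by
  have hasDerivAt_integratedLegendre (t : ℝ) :
      HasDerivAt (fun t => (integratedLegendre n).eval t) ((legendre (n + 1)).eval t) t :=
    derivative_integratedLegendre n ▸ (integratedLegendre n).hasDerivAt t
  calc jacobiPhat 0 (n + 2) x = ∫ t in (-1)..x, (legendre (n + 1)).eval t := by
        simp [jacobiPhat, jacobiP_zero_eq_eval_legendre]
    _ = (integratedLegendre n).eval x - (integratedLegendre n).eval (-1) :=
        intervalIntegral.integral_eq_sub_of_hasDerivAt
          (fun t _ => hasDerivAt_integratedLegendre t)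
          ((legendre (n + 1)).continuous.intervalIntegrable _ _)
    _ = (integratedLegendre n).eval x := by rw [integratedLegendre_eval_neg_one, sub_zero]

theorem curl2_eval_div_mul_pow (F : ℝ[X]) (n : ℕ) {x y : ℝ} (hy : y ≠ 1) :
    curl2 (fun r => F.eval (r.1 / (1 - r.2)) * (1 - r.2) ^ (n + 1)) (x, y) =
      ((1 - y) ^ n * (X * derivative F - (n + 1 : ℝ) • F).eval (x / (1 - y)),
        -((1 - y) ^ n * (derivative F).eval (x / (1 - y)))) := by
  have hs : 1 - y ≠ 0 := sub_ne_zero.mpr hy.symm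
  have hasDerivAt_sub : HasDerivAt (fun y : ℝ => 1 - y) (-1) y :=
    (hasDerivAt_id y).const_sub 1
  have hasDerivAt_y : HasDerivAt (fun y : ℝ => x / (1 - y)) (x / (1 - y) ^ 2) y := by
    simpa using (hasDerivAt_const y x).fun_div hasDerivAt_sub hs
  have hasDerivAt_x : HasDerivAt (fun x : ℝ => x / (1 - y)) (1 / (1 - y)) x :=
    (hasDerivAt_id x).div_const (1 - y)
  have partial_y := (((F.hasDerivAt _).comp y hasDerivAt_y).fun_mul
    (hasDerivAt_sub.fun_pow (n + 1))).deriv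
  have partial_x := (((F.hasDerivAt _).comp x hasDerivAt_x).mul_const ((1 - y) ^ (n + 1))).deriv
  simp only [Function.comp_def] at partial_y partial_x
  simp only [curl2, partial_y, partial_x, Prod.mk.injEq, eval_sub, eval_mul, eval_X, eval_smul,
    smul_eq_mul]
  constructor
  · push_cast
    field_simp
    ring
  · field_simp
    ring

theorem phiTop_succ (n : ℕ) {x y : ℝ} (hy : y ≠ 1) :
    phiTop (n + 1) (x, y) =
      ((1 - y) ^ (n + 1) *
          (X * legendre (n + 1) - (n + 2 : ℝ) • integratedLegendre n).eval (x / (1 - y)),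
        -((1 - y) ^ (n + 1) * (legendre (n + 1)).eval (x / (1 - y)))) := by
  have coeff_eq : ((n + 1 : ℕ) : ℝ) + 1 = n + 2 := by
    push_cast
    ring
  have curl_eq := curl2_eval_div_mul_pow (integratedLegendre n) (n + 1) (x := x) hy
  rw [derivative_integratedLegendre] at curl_eq
  simp only [phiTop, jacobiPhat_zero_eq_eval_integratedLegendre, curl_eq, coeff_eq]

theorem integral_dot2_phiTop_slice_eq_zero (n : ℕ) {q₁ q₂ : ℝ[X]} (h₁ : q₁.degree < n)
    (h₂ : q₂.degree < (n + 1 : ℕ)) (y : ℝ) :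
    ∫ x in (-(1 - y))..(1 - y), dot2 (phiTop (n + 1) (x, y)) (q₁.eval x, q₂.eval x) = 0 := by
  rcases eq_or_ne y 1 with rfl | hy
  · simp
  set R : ℝ[X] := X * legendre (n + 1) - (n + 2 : ℝ) • integratedLegendre n
  have hR : R ∈ orthogonalDegreeLT (-1) 1 n :=
    Submodule.sub_mem _ (X_mul_mem_orthogonalDegreeLT (legendre_mem_orthogonalDegreeLT (n + 1)))
      (Submodule.smul_mem _ _ (integratedLegendre_mem_orthogonalDegreeLT n))
  have first_component :
      ∫ x in (-(1 - y))..(1 - y), R.eval (x / (1 - y)) * q₁.eval x = 0 := by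
    simpa using integral_eval_div_mul_eval_eq_zero hR h₁ (1 - y)
  have second_component :
      ∫ x in (-(1 - y))..(1 - y), (legendre (n + 1)).eval (x / (1 - y)) * q₂.eval x = 0 := by
    simpa using integral_eval_div_mul_eval_eq_zero
      (legendre_mem_orthogonalDegreeLT (n + 1)) h₂ (1 - y)
  have integrand_eq (x : ℝ) : dot2 (phiTop (n + 1) (x, y)) (q₁.eval x, q₂.eval x) =
      (1 - y) ^ (n + 1) * (R.eval (x / (1 - y)) * q₁.eval x) -
        (1 - y) ^ (n + 1) * ((legendre (n + 1)).eval (x / (1 - y)) * q₂.eval x) := by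
    simp only [phiTop_succ n hy, dot2, R]
    ring
  simp only [integrand_eq]
  rw [intervalIntegral.integral_sub (Continuous.intervalIntegrable (by fun_prop) _ _)
      (Continuous.intervalIntegrable (by fun_prop) _ _),
    intervalIntegral.integral_const_mul, intervalIntegral.integral_const_mul,
    first_component, second_component, mul_zero, sub_zero]

end

theorem phiTop_orthogonal_to_low_order_general (k : ℕ) (q₁ q₂ : MvPolynomial (Fin 2) ℝ)
    (h₁ : q₁.degreeOf 0 + 1 < k) (h₂ : q₂.degreeOf 0 < k) :
    ∫ p in refTriangle,
        dot2 (phiTop k p)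
          (MvPolynomial.eval ![p.1, p.2] q₁, MvPolynomial.eval ![p.1, p.2] q₂) = 0 := by
  obtain ⟨n, rfl⟩ : ∃ n, k = n + 1 := ⟨k - 1, by lia⟩
  refine setIntegral_refTriangle_eq_zero_of_slice fun y _ => ?_
  simp only [← eval_horizontalRestriction]
  exact integral_dot2_phiTop_slice_eq_zero n
    ((degree_horizontalRestriction_le q₁ y).trans_lt (by exact_mod_cast Nat.lt_of_succ_lt_succ h₁))
    ((degree_horizontalRestriction_le q₂ y).trans_lt (by exact_mod_cast h₂)) y

/-- The highest-order edge basis function `φ_k` is `L²(T̂₂)`-orthogonal to all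
vector-valued polynomials of total degree at most `k - 2`. -/
theorem phiTop_orthogonal_to_low_order (k : ℕ) (hk : 2 ≤ k)
    (q₁ q₂ : MvPolynomial (Fin 2) ℝ)
    (h₁ : q₁.totalDegree ≤ k - 2) (h₂ : q₂.totalDegree ≤ k - 2) :
    ∫ p in refTriangle,
        dot2 (phiTop k p)
          (MvPolynomial.eval ![p.1, p.2] q₁, MvPolynomial.eval ![p.1, p.2] q₂) = 0 := by
  have hx₁ := q₁.degreeOf_le_totalDegree 0
  have hx₂ := q₂.degreeOf_le_totalDegree 0
  exact phiTop_orthogonal_to_low_order_general k q₁ q₂ (by lia) (by lia)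
end
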